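/- arXiv:2004.10893 — 4 statements merged into one kernel-verified Lean document; each statement's English description precedes it below -/
import Mathlib

section
/- If G is a connected 1-walk-regular finite simple graph, then the partially coherent algebra of G is equal to the adjacency algebra of G, i.e., the algebra of all polynomials (with complex coefficients) in the adjacency matrix A_G. -/
open Matrix BigOperators

/-- The all-ones matrix. -/
def allOnes (V : Type*) : Matrix V V ℂ := Matrix.of fun _ _ => 1

/-- A subspace `S` of `ℂ^{V×V}` is a partially coherent algebra (with respect to
`{I, A}`) if it contains `I`, `A` and `J`, is closed under matrix multiplication and
conjugate transposition, and is closed under Schur product with `I` and with `A`. -/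
def IsPartiallyCoherent {V : Type*} [Fintype V] [DecidableEq V]
    (A : Matrix V V ℂ) (S : Submodule ℂ (Matrix V V ℂ)) : Prop :=
  (1 : Matrix V V ℂ) ∈ S ∧ A ∈ S ∧ allOnes V ∈ S ∧
  (∀ X ∈ S, ∀ Y ∈ S, X * Y ∈ S) ∧
  (∀ X ∈ S, Xᴴ ∈ S) ∧
  (∀ X ∈ S, Matrix.hadamard (1 : Matrix V V ℂ) X ∈ S) ∧
  (∀ X ∈ S, Matrix.hadamard A X ∈ S)

/-- The partially coherent algebra of a graph: the smallest partially coherent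
algebra containing the adjacency matrix. -/
noncomputable def pcAlgebra {V : Type*} [Fintype V] [DecidableEq V] (A : Matrix V V ℂ) :
    Submodule ℂ (Matrix V V ℂ) :=
  sInf {S | IsPartiallyCoherent A S}

/-- `G` is walk-regular: `I ∘ A^ℓ = a_ℓ I` for some number `a_ℓ`, for every `ℓ`. -/
def WalkRegular {V : Type*} [Fintype V] [DecidableEq V]
    (G : SimpleGraph V) [DecidableRel G.Adj] : Prop :=
  ∀ ℓ : ℕ, ∃ a : ℝ,
    Matrix.hadamard (1 : Matrix V V ℝ) ((G.adjMatrix ℝ) ^ ℓ) = a • (1 : Matrix V V ℝ)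

/-- `G` is 1-walk-regular: it is walk-regular and `A ∘ A^ℓ = b_ℓ A` for some `b_ℓ`. -/
def OneWalkRegular {V : Type*} [Fintype V] [DecidableEq V]
    (G : SimpleGraph V) [DecidableRel G.Adj] : Prop :=
  WalkRegular G ∧
  ∀ ℓ : ℕ, ∃ b : ℝ,
    Matrix.hadamard (G.adjMatrix ℝ) ((G.adjMatrix ℝ) ^ ℓ) = b • G.adjMatrix ℝ

/-!
The adjacency algebra `ℂ[A]` lies inside every partially coherent algebra, so the content is that
`ℂ[A]` is itself partially coherent. It is closed under conjugate transposition because `A` is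
Hermitian. Schur multiplication by `I` and by `A` is linear, and 1-walk-regularity says exactly that
it sends each power `A ^ ℓ` into `span {I}` and `span {A}` respectively.

For `J ∈ ℂ[A]`: the Laplacian `L` is singular, so some nonzero polynomial `N` in `L` is annihilated
by `L` on both sides. As `G` is connected, `ker L` consists of the constant vectors, so the rows and
the columns of `N` are constant and `N` is a nonzero multiple of `J`. Walk-regularity for closed
walks of length two makes `G` regular, and then `L = d I - A` is a polynomial in `A`.
-/

section Algebra

variable {K A : Type*} [CommRing K] [Ring A] [Algebra K A]

theorem exists_mem_adjoin_singleton_mul_eq_zero [IsArtinianRing K] {a : A}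
    (ha : IsIntegral K a) (hunit : ¬ IsUnit a) :
    ∃ b ∈ Algebra.adjoin K {a}, b ≠ 0 ∧ a * b = 0 ∧ b * a = 0 := by
  let B := Algebra.adjoin K {a}
  let a' : B := ⟨a, Algebra.self_mem_adjoin_singleton K a⟩
  have : Module.Finite K B := Algebra.finite_adjoin_simple_of_isIntegral ha
  have : IsArtinianRing B := isArtinian_of_tower K inferInstance
  have hdiv : a' ∉ nonZeroDivisors B := fun h ↦
    hunit ((IsArtinianRing.isUnit_of_mem_nonZeroDivisors h).map B.subtype)
  obtain ⟨b, hab, hb⟩ : ∃ b : B, a' * b = 0 ∧ b ≠ 0 := by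
    simpa [mem_nonZeroDivisors_iff_left] using hdiv
  refine ⟨b, b.2, by simpa using hb, congrArg Subtype.val hab, ?_⟩
  exact congrArg Subtype.val ((mul_comm b a').trans hab)

end Algebra

section Matrix

variable {V R S : Type*}

theorem map_hadamard {m n F : Type*} [Mul R] [Mul S] [FunLike F R S] [MulHomClass F R S] (f : F)
    (M N : Matrix m n R) :
    (M ⊙ N).map f = M.map f ⊙ N.map f :=
  Matrix.ext fun _ _ ↦ map_mul f _ _

variable [Fintype V] [DecidableEq V] [CommSemiring R]

theorem map_mem_adjoin_singleton [CommSemiring S] [Algebra R S] {M N : Matrix V V R}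
    (hN : N ∈ Algebra.adjoin R {M}) :
    N.map (algebraMap R S) ∈ Algebra.adjoin S {M.map (algebraMap R S)} := by
  have hmap : N.map (algebraMap R S) ∈ Algebra.adjoin R {M.map (algebraMap R S)} := by
    have h := Subalgebra.mem_map.2 ⟨N, hN, AlgHom.mapMatrix_apply (Algebra.ofId R S) N⟩
    rwa [AlgHom.map_adjoin_singleton] at h
  rw [← Algebra.adjoin_adjoin_of_tower R]
  exact Algebra.subset_adjoin hmap

theorem hadamard_mem_of_mem_adjoin_singleton {M N X : Matrix V V R}
    {W : Submodule R (Matrix V V R)} (hpow : ∀ ℓ : ℕ, M ⊙ (N ^ ℓ) ∈ W)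
    (hX : X ∈ Algebra.adjoin R {N}) : M ⊙ X ∈ W := by
  rw [← Subalgebra.mem_toSubmodule, Algebra.adjoin_eq_span] at hX
  induction hX using Submodule.span_induction with
  | mem Y hY =>
    obtain ⟨ℓ, rfl⟩ := Submonoid.mem_closure_singleton.1 hY
    exact hpow ℓ
  | zero => simp
  | add Y Z _ _ hY hZ => exact Matrix.hadamard_add M Y Z ▸ add_mem hY hZ
  | smul c Y _ hY => exact Matrix.hadamard_smul M Y c ▸ W.smul_mem c hY

theorem map_hadamard_mem_span_singleton [CommSemiring S] (f : R →+* S) {M N : Matrix V V R}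
    (hpow : ∀ ℓ : ℕ, ∃ b : R, M ⊙ (N ^ ℓ) = b • M) {X : Matrix V V S}
    (hX : X ∈ Algebra.adjoin S {N.map f}) : M.map f ⊙ X ∈ Submodule.span S {M.map f} := by
  refine hadamard_mem_of_mem_adjoin_singleton (fun ℓ ↦ ?_) hX
  obtain ⟨b, hb⟩ := hpow ℓ
  have hbf : M.map f ⊙ (N.map f ^ ℓ) = f b • M.map f := by
    rw [← Matrix.map_pow, ← map_hadamard, hb, Matrix.map_smul' _ _ _ (map_mul f)]
  exact Submodule.mem_span_singleton.2 ⟨f b, hbf.symm⟩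

theorem conjTranspose_mem_adjoin_singleton [StarRing R] {M X : Matrix V V R} (hM : M.IsHermitian)
    (hX : X ∈ Algebra.adjoin R {M}) : Xᴴ ∈ Algebra.adjoin R {M} := by
  have hstar : star (Algebra.adjoin R {M}) = Algebra.adjoin R {M} := by
    rw [Subalgebra.star_adjoin_comm, Set.star_singleton, Matrix.star_eq_conjTranspose, hM.eq]
  rw [← hstar]
  exact (Subalgebra.star_mem_star_iff _ X).2 hX

end Matrix

section Graph

variable {V : Type*} {G : SimpleGraph V} [DecidableRel G.Adj]

theorem map_adjMatrix {R S F : Type*} [Zero R] [One R] [Zero S] [One S] [FunLike F R S]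
    [ZeroHomClass F R S] [OneHomClass F R S] (f : F) :
    (G.adjMatrix R).map f = G.adjMatrix S := by
  ext i j
  simp [apply_ite f]

variable [Fintype V] [DecidableEq V]

theorem lapMatrix_eq_of_isRegularOfDegree {R : Type*} [AddGroupWithOne R] {d : ℕ}
    (hd : G.IsRegularOfDegree d) : G.lapMatrix R = (d : Matrix V V R) - G.adjMatrix R := by
  simp only [SimpleGraph.lapMatrix, SimpleGraph.degMatrix, hd.degree_eq, Matrix.diagonal_natCast]

theorem exists_eq_smul_of_one_of_lapMatrix_mul_eq_zero (hG : G.Connected) {N : Matrix V V ℝ}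
    (hleft : G.lapMatrix ℝ * N = 0) (hright : N * G.lapMatrix ℝ = 0) :
    ∃ c : ℝ, N = c • Matrix.of 1 := by
  have hcol {M : Matrix V V ℝ} (hM : G.lapMatrix ℝ * M = 0) (i i' j : V) : M i j = M i' j := by
    have hker : G.lapMatrix ℝ *ᵥ M.col j = 0 := by
      ext k
      exact congrFun₂ hM k j
    exact G.lapMatrix_mulVec_eq_zero_iff_forall_reachable.1 hker i i' (hG.preconnected i i')
  have htranspose : G.lapMatrix ℝ * Nᵀ = 0 := by
    simpa [Matrix.transpose_mul, (G.isSymm_lapMatrix (R := ℝ)).eq] using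
      congrArg Matrix.transpose hright
  obtain ⟨v⟩ := hG.nonempty
  refine ⟨N v v, Matrix.ext fun i j ↦ ?_⟩
  calc N i j = N v j := hcol hleft i v j
    _ = N v v := hcol htranspose j v v
    _ = (N v v • Matrix.of 1) i j := by simp

theorem not_isUnit_lapMatrix [Nonempty V] : ¬ IsUnit (G.lapMatrix ℝ) := by
  simp [Matrix.isUnit_iff_isUnit_det]

theorem of_one_mem_adjoin_lapMatrix (hG : G.Connected) :
    Matrix.of 1 ∈ Algebra.adjoin ℝ {G.lapMatrix ℝ} := by
  have := hG.nonempty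
  obtain ⟨N, hN, hN0, hleft, hright⟩ := exists_mem_adjoin_singleton_mul_eq_zero
    (IsIntegral.of_finite ℝ (G.lapMatrix ℝ)) not_isUnit_lapMatrix
  obtain ⟨c, rfl⟩ := exists_eq_smul_of_one_of_lapMatrix_mul_eq_zero hG hleft hright
  have hc : c ≠ 0 := left_ne_zero_of_smul hN0
  simpa [smul_smul, hc] using Subalgebra.smul_mem _ hN c⁻¹

theorem of_one_mem_adjoin_adjMatrix (hG : G.Connected) {d : ℕ} (hd : G.IsRegularOfDegree d) :
    Matrix.of 1 ∈ Algebra.adjoin ℝ {G.adjMatrix ℝ} := by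
  have hlap : G.lapMatrix ℝ ∈ Algebra.adjoin ℝ {G.adjMatrix ℝ} := by
    rw [lapMatrix_eq_of_isRegularOfDegree hd]
    exact sub_mem (natCast_mem _ d) (Algebra.self_mem_adjoin_singleton ℝ _)
  exact Algebra.adjoin_le (Set.singleton_subset_iff.2 hlap) (of_one_mem_adjoin_lapMatrix hG)

theorem allOnes_mem_adjoin_adjMatrix (hG : G.Connected) {d : ℕ} (hd : G.IsRegularOfDegree d) :
    allOnes V ∈ Algebra.adjoin ℂ {G.adjMatrix ℂ} := by
  have hmap := map_mem_adjoin_singleton (S := ℂ) (of_one_mem_adjoin_adjMatrix hG hd)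
  rw [map_adjMatrix] at hmap
  convert hmap
  ext
  simp [allOnes]

theorem WalkRegular.exists_isRegularOfDegree (hG : WalkRegular G) :
    ∃ d, G.IsRegularOfDegree d := by
  obtain ⟨a, ha⟩ := hG 2
  have hdeg (v : V) : (G.degree v : ℝ) = a := by
    have hv := congrFun₂ ha v v
    rw [sq, Matrix.hadamard_apply, G.adjMatrix_mul_self_apply_self] at hv
    simpa using hv
  exact ⟨⌊a⌋₊, fun v ↦ by rw [← hdeg v, Nat.floor_natCast]⟩

theorem WalkRegular.one_hadamard_mem_span (hG : WalkRegular G) {X : Matrix V V ℂ}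
    (hX : X ∈ Algebra.adjoin ℂ {G.adjMatrix ℂ}) : 1 ⊙ X ∈ Submodule.span ℂ {1} := by
  rw [← map_adjMatrix Complex.ofRealHom] at hX
  simpa [Matrix.map_one] using map_hadamard_mem_span_singleton Complex.ofRealHom hG hX

theorem OneWalkRegular.adjMatrix_hadamard_mem_span (hG : OneWalkRegular G) {X : Matrix V V ℂ}
    (hX : X ∈ Algebra.adjoin ℂ {G.adjMatrix ℂ}) :
    G.adjMatrix ℂ ⊙ X ∈ Submodule.span ℂ {G.adjMatrix ℂ} := by
  rw [← map_adjMatrix Complex.ofRealHom] at hX ⊢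
  exact map_hadamard_mem_span_singleton Complex.ofRealHom hG.2 hX

end Graph

section PartiallyCoherent

variable {V : Type*} [Fintype V] [DecidableEq V] {A : Matrix V V ℂ}

theorem IsPartiallyCoherent.adjoin_singleton_le {S : Submodule ℂ (Matrix V V ℂ)}
    (hS : IsPartiallyCoherent A S) : Subalgebra.toSubmodule (Algebra.adjoin ℂ {A}) ≤ S := by
  obtain ⟨hone, hA, -, hmul, -⟩ := hS
  exact Algebra.adjoin_le (S := S.toSubalgebra hone fun X Y hX hY ↦ hmul X hX Y hY)
    (Set.singleton_subset_iff.2 hA)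

theorem pcAlgebra_eq_adjoin_singleton
    (h : IsPartiallyCoherent A (Subalgebra.toSubmodule (Algebra.adjoin ℂ {A}))) :
    pcAlgebra A = Subalgebra.toSubmodule (Algebra.adjoin ℂ {A}) :=
  le_antisymm (sInf_le h) (le_sInf fun _ ↦ IsPartiallyCoherent.adjoin_singleton_le)

theorem OneWalkRegular.isPartiallyCoherent_adjoin {G : SimpleGraph V} [DecidableRel G.Adj]
    (h : OneWalkRegular G) (hconn : G.Connected) : IsPartiallyCoherent (G.adjMatrix ℂ)
      (Subalgebra.toSubmodule (Algebra.adjoin ℂ {G.adjMatrix ℂ})) := by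
  obtain ⟨d, hd⟩ := h.1.exists_isRegularOfDegree
  have hone := one_mem (Algebra.adjoin ℂ {G.adjMatrix ℂ})
  have hadj := Algebra.self_mem_adjoin_singleton ℂ (G.adjMatrix ℂ)
  refine ⟨hone, hadj, allOnes_mem_adjoin_adjMatrix hconn hd, ?_, ?_, ?_, ?_⟩
  · exact fun X hX Y hY ↦ Subalgebra.mul_mem _ hX hY
  · exact fun X hX ↦ conjTranspose_mem_adjoin_singleton (G.isHermitian_adjMatrix ℂ) hX
  · exact fun X hX ↦ (Submodule.span_singleton_le_iff_mem _ _).2 hone (h.1.one_hadamard_mem_span hX)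
  · exact fun X hX ↦
      (Submodule.span_singleton_le_iff_mem _ _).2 hadj (h.adjMatrix_hadamard_mem_span hX)

end PartiallyCoherent

/-- For a connected 1-walk-regular graph, the partially coherent algebra equals the
adjacency algebra (polynomials in the adjacency matrix). -/
theorem pcAlgebra_eq_adjacencyAlgebra_of_oneWalkRegular {V : Type*}
    [Fintype V] [DecidableEq V]
    (G : SimpleGraph V) [DecidableRel G.Adj]
    (hconn : G.Connected) (h1wr : OneWalkRegular G) :
    (pcAlgebra (G.adjMatrix ℂ) : Set (Matrix V V ℂ)) =
      {X | ∃ p : Polynomial ℂ, X = Polynomial.aeval (G.adjMatrix ℂ) p} := by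
  rw [pcAlgebra_eq_adjoin_singleton (h1wr.isPartiallyCoherent_adjoin hconn)]
  ext X
  simp [Algebra.adjoin_singleton_eq_range_aeval, eq_comm]
end

section
/- Let Φ: ℂ^{n×n} → ℂ^{n×n} be given by Φ(Z) = Σ_{i=1}^m K_i Z K_i† for matrices K_1, …, K_m ∈ ℂ^{n×n} satisfying Σ_i K_i K_i† = I (Φ is unital) and Σ_i K_i† K_i = I (Φ is trace-preserving), and let Φ†(Z) = Σ_{i=1}^m K_i† Z K_i denote its adjoint. If X, Y ∈ ℂ^{n×n} satisfy Φ(X) = Y and Φ†(Y) = X, then Φ(XW) = Φ(X)Φ(W) and Φ(WX) = Φ(W)Φ(X) for every matrix W ∈ ℂ^{n×n}. -/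
open Matrix BigOperators

/-- The completely positive map with Kraus operators `K i`. -/
noncomputable def krausMap {n : Type*} [Fintype n] {m : ℕ} (K : Fin m → Matrix n n ℂ)
    (Z : Matrix n n ℂ) : Matrix n n ℂ :=
  ∑ i, K i * Z * (K i)ᴴ

/-- The adjoint (with respect to the trace inner product) of the Kraus map. -/
noncomputable def krausMapAdj {n : Type*} [Fintype n] {m : ℕ} (K : Fin m → Matrix n n ℂ)
    (Z : Matrix n n ℂ) : Matrix n n ℂ :=
  ∑ i, (K i)ᴴ * Z * K i

/-!
The trace of `∑ i, (K i * X - Y * K i)ᴴ * (K i * X - Y * K i)` expands to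
`tr (Xᴴ (∑ Kᵢᴴ Kᵢ) X) - tr (Xᴴ Φ†(Y)) - tr (Yᴴ Φ(X)) + tr (Y (∑ Kᵢ Kᵢᴴ) Yᴴ)`.
If `Φ(X) = Y` and `Φ†(Y) = X`, the two middle terms are `- tr (Xᴴ X) - tr (Yᴴ Y)`, so the whole
is nonpositive as soon as `∑ Kᵢᴴ Kᵢ` and `∑ Kᵢ Kᵢᴴ` are at most `1`. A sum of squares being
nonnegative, `Kᵢ X = Y Kᵢ` for every `i`, which pulls a left factor `X` out of `Φ`. Taking
adjoints, the pair `Xᴴ, Yᴴ` satisfies the same equations; hence `X Kᵢᴴ = Kᵢᴴ Y`, which pulls out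
a right factor `X`.
-/

section ElementaryOp

variable {ι m n R : Type*} [Fintype ι] [Fintype n]

/-- The elementary operator `Z ↦ ∑ i, A i * Z * B i` on matrices. With `B i = (A i)ᴴ` it is the
completely positive map with Kraus operators `A i`, and exchanging `A` and `B` gives the adjoint of
that map; the `A i` may be rectangular. -/
def elementaryOp [NonUnitalNonAssocSemiring R] (A : ι → Matrix m n R) (B : ι → Matrix n m R)
    (Z : Matrix n n R) : Matrix m m R :=
  ∑ i, A i * Z * B i

theorem conjTranspose_elementaryOp [NonUnitalSemiring R] [StarRing R]
    (A : ι → Matrix m n R) (B : ι → Matrix n m R) (Z : Matrix n n R) :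
    (elementaryOp A B Z)ᴴ = elementaryOp (fun i ↦ (B i)ᴴ) (fun i ↦ (A i)ᴴ) Zᴴ := by
  simp only [elementaryOp, conjTranspose_sum, conjTranspose_mul, Matrix.mul_assoc]

variable [Fintype m]

theorem elementaryOp_mul_left [NonUnitalSemiring R] {A : ι → Matrix m n R}
    {X : Matrix n n R} {Y : Matrix m m R} (hA : ∀ i, A i * X = Y * A i)
    (B : ι → Matrix n m R) (W : Matrix n n R) :
    elementaryOp A B (X * W) = Y * elementaryOp A B W := by
  simp only [elementaryOp, Finset.mul_sum, ← Matrix.mul_assoc, hA]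

theorem elementaryOp_mul_right [NonUnitalSemiring R] {B : ι → Matrix n m R}
    {X : Matrix n n R} {Y : Matrix m m R} (hB : ∀ i, X * B i = B i * Y)
    (A : ι → Matrix m n R) (W : Matrix n n R) :
    elementaryOp A B (W * X) = elementaryOp A B W * Y := by
  simp only [elementaryOp, Finset.sum_mul, Matrix.mul_assoc, hB]

end ElementaryOp

section Intertwining

variable {ι m n R : Type*} [Fintype ι] [Fintype m] [Fintype n] [CommRing R] [StarRing R]

theorem trace_conjTranspose_mul_self_mul_sub_mul (K : Matrix m n R) (X : Matrix n n R)
    (Y : Matrix m m R) :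
    ((K * X - Y * K)ᴴ * (K * X - Y * K)).trace =
      (Xᴴ * (Kᴴ * K) * X).trace - (Xᴴ * (Kᴴ * Y * K)).trace
        - (Yᴴ * (K * X * Kᴴ)).trace + (Y * (K * Kᴴ) * Yᴴ).trace := by
  have trace_cross : (Kᴴ * Yᴴ * (K * X)).trace = (Yᴴ * (K * X * Kᴴ)).trace := by
    rw [Matrix.mul_assoc, trace_mul_comm, Matrix.mul_assoc]
  have trace_square : (Kᴴ * Yᴴ * (Y * K)).trace = (Y * (K * Kᴴ) * Yᴴ).trace := by
    rw [trace_mul_comm]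
    simp only [Matrix.mul_assoc]
  simp only [conjTranspose_sub, conjTranspose_mul, Matrix.sub_mul, Matrix.mul_sub, trace_sub,
    trace_cross, trace_square]
  simp only [Matrix.mul_assoc]
  ring

theorem sum_trace_conjTranspose_mul_self_mul_sub_mul (K : ι → Matrix m n R) (X : Matrix n n R)
    (Y : Matrix m m R) :
    ∑ i, ((K i * X - Y * K i)ᴴ * (K i * X - Y * K i)).trace =
      (Xᴴ * (∑ i, (K i)ᴴ * K i) * X).trace
        - (Xᴴ * elementaryOp (fun i ↦ (K i)ᴴ) K Y).trace
        - (Yᴴ * elementaryOp K (fun i ↦ (K i)ᴴ) X).trace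
        + (Y * (∑ i, K i * (K i)ᴴ) * Yᴴ).trace := by
  simp only [trace_conjTranspose_mul_self_mul_sub_mul, elementaryOp, Finset.mul_sum,
    Finset.sum_mul, trace_sum, Finset.sum_sub_distrib, Finset.sum_add_distrib]

variable [PartialOrder R] [StarOrderedRing R] [NoZeroDivisors R] [DecidableEq m] [DecidableEq n]
  {K : ι → Matrix m n R} {X : Matrix n n R} {Y : Matrix m m R}

theorem mul_eq_mul_of_elementaryOp_eq
    (hsubunital : (1 - ∑ i, K i * (K i)ᴴ).PosSemidef)
    (hsubtrace : (1 - ∑ i, (K i)ᴴ * K i).PosSemidef)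
    (hXY : elementaryOp K (fun i ↦ (K i)ᴴ) X = Y)
    (hYX : elementaryOp (fun i ↦ (K i)ᴴ) K Y = X) (i : ι) :
    K i * X = Y * K i := by
  have trace_nonneg (j : ι) : 0 ≤ ((K j * X - Y * K j)ᴴ * (K j * X - Y * K j)).trace :=
    (posSemidef_conjTranspose_mul_self _).trace_nonneg
  have sum_eq : ∑ j, ((K j * X - Y * K j)ᴴ * (K j * X - Y * K j)).trace =
      -((Xᴴ * (1 - ∑ j, (K j)ᴴ * K j) * X).trace
        + (Y * (1 - ∑ j, K j * (K j)ᴴ) * Yᴴ).trace) := by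
    rw [sum_trace_conjTranspose_mul_self_mul_sub_mul, hXY, hYX, trace_mul_comm Yᴴ Y]
    simp only [Matrix.mul_sub, Matrix.sub_mul, Matrix.mul_one, trace_sub]
    ring
  have sum_nonpos : ∑ j, ((K j * X - Y * K j)ᴴ * (K j * X - Y * K j)).trace ≤ 0 := by
    rw [sum_eq, neg_nonpos]
    exact add_nonneg (hsubtrace.conjTranspose_mul_mul_same X).trace_nonneg
      (hsubunital.mul_mul_conjTranspose_same Y).trace_nonneg
  have sum_eq_zero : ∑ j, ((K j * X - Y * K j)ᴴ * (K j * X - Y * K j)).trace = 0 :=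
    sum_nonpos.antisymm (Finset.sum_nonneg fun j _ ↦ trace_nonneg j)
  have trace_eq_zero : ((K i * X - Y * K i)ᴴ * (K i * X - Y * K i)).trace = 0 :=
    (Finset.sum_eq_zero_iff_of_nonneg fun j _ ↦ trace_nonneg j).1 sum_eq_zero i (Finset.mem_univ i)
  exact sub_eq_zero.1 (trace_conjTranspose_mul_self_eq_zero_iff.1 trace_eq_zero)

theorem mul_conjTranspose_eq_conjTranspose_mul_of_elementaryOp_eq
    (hsubunital : (1 - ∑ i, K i * (K i)ᴴ).PosSemidef)
    (hsubtrace : (1 - ∑ i, (K i)ᴴ * K i).PosSemidef)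
    (hXY : elementaryOp K (fun i ↦ (K i)ᴴ) X = Y)
    (hYX : elementaryOp (fun i ↦ (K i)ᴴ) K Y = X) (i : ι) :
    X * (K i)ᴴ = (K i)ᴴ * Y := by
  have hXY' : elementaryOp K (fun i ↦ (K i)ᴴ) Xᴴ = Yᴴ := by
    simp only [← hXY, conjTranspose_elementaryOp, conjTranspose_conjTranspose]
  have hYX' : elementaryOp (fun i ↦ (K i)ᴴ) K Yᴴ = Xᴴ := by
    simp only [← hYX, conjTranspose_elementaryOp, conjTranspose_conjTranspose]
  have intertwine : K i * Xᴴ = Yᴴ * K i :=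
    mul_eq_mul_of_elementaryOp_eq hsubunital hsubtrace hXY' hYX' i
  simpa only [conjTranspose_mul, conjTranspose_conjTranspose] using congrArg (·ᴴ) intertwine

theorem krausMap_mul_general
    (hsubunital : (1 - ∑ i, K i * (K i)ᴴ).PosSemidef)
    (hsubtrace : (1 - ∑ i, (K i)ᴴ * K i).PosSemidef)
    (hXY : elementaryOp K (fun i ↦ (K i)ᴴ) X = Y)
    (hYX : elementaryOp (fun i ↦ (K i)ᴴ) K Y = X) (W : Matrix n n R) :
    elementaryOp K (fun i ↦ (K i)ᴴ) (X * W) =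
        elementaryOp K (fun i ↦ (K i)ᴴ) X * elementaryOp K (fun i ↦ (K i)ᴴ) W ∧
      elementaryOp K (fun i ↦ (K i)ᴴ) (W * X) =
        elementaryOp K (fun i ↦ (K i)ᴴ) W * elementaryOp K (fun i ↦ (K i)ᴴ) X := by
  rw [hXY]
  exact ⟨elementaryOp_mul_left (mul_eq_mul_of_elementaryOp_eq hsubunital hsubtrace hXY hYX) _ W,
    elementaryOp_mul_right
      (mul_conjTranspose_eq_conjTranspose_mul_of_elementaryOp_eq hsubunital hsubtrace hXY hYX) _ W⟩

end Intertwining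

/-- For a unital trace-preserving completely positive map `Φ` with `Φ(X) = Y` and
`Φ†(Y) = X`, we have `Φ(XW) = Φ(X)Φ(W)` and `Φ(WX) = Φ(W)Φ(X)` for every `W`. -/
theorem krausMap_mul {n : Type*} [Fintype n] [DecidableEq n] {m : ℕ}
    (K : Fin m → Matrix n n ℂ)
    (hunital : ∑ i, K i * (K i)ᴴ = 1)
    (htp : ∑ i, (K i)ᴴ * K i = 1)
    (X Y : Matrix n n ℂ)
    (hXY : krausMap K X = Y) (hYX : krausMapAdj K Y = X) :
    ∀ W : Matrix n n ℂ,
      krausMap K (X * W) = krausMap K X * krausMap K W ∧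
      krausMap K (W * X) = krausMap K W * krausMap K X := by
  open scoped ComplexOrder in
  exact krausMap_mul_general (by simp [hunital, PosSemidef.zero]) (by simp [htp, PosSemidef.zero])
    hXY hYX
end

section
/- Let Φ: ℂ^{n×n} → ℂ^{n×n} be given by Φ(Z) = Σ_{i=1}^m K_i Z K_i† for matrices K_1, …, K_m ∈ ℂ^{n×n} satisfying Σ_i K_i K_i† = I and Σ_i K_i† K_i = I, with adjoint Φ†(Z) = Σ_{i=1}^m K_i† Z K_i. If X, Y ∈ ℂ^{n×n} are Hermitian matrices satisfying Φ(X) = Y and Φ†(Y) = X, then X and Y are cospectral, i.e., they have the same characteristic polynomial. -/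
open Matrix BigOperators

/-!
The defect in the Kadison–Schwarz inequality is a sum of squares:
`Φ(X Xᴴ) - Y Yᴴ = ∑ i, (K i * X - Y * K i) * (K i * X - Y * K i)ᴴ` when `Φ` is unital and
`Φ(X) = Y`. Its trace is `tr (X Xᴴ) - tr (Y Yᴴ)` because `Φ` preserves traces, and this vanishes
because `tr (Y Yᴴ) = tr (Φ(X) Yᴴ) = tr (X Φ†(Yᴴ)) = tr (X Xᴴ)`. Hence every `K i` intertwines `X`
and `Y`, and therefore their powers, so `tr (X ^ k) = tr (Φ(X ^ k)) = tr (Y ^ k)` for all `k`. In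
characteristic zero these traces determine the characteristic polynomial: the multiplicity of a root
`μ` is the trace of the projection onto a generalized eigenspace, and a single polynomial, read off
a Bézout identity for the factors of `X.charpoly * Y.charpoly` at and away from `μ`, expresses this
projection for both matrices.
-/

section KrausSums

variable {ι m n R : Type*} [Fintype ι] [Fintype m] [Fintype n]

theorem trace_sum_mul_mul_mul [CommSemiring R] (K : ι → Matrix m n R) (L : ι → Matrix n m R)
    (A : Matrix n n R) (B : Matrix m m R) :
    ((∑ i, K i * A * L i) * B).trace = (A * ∑ i, L i * B * K i).trace := by
  simp only [Matrix.sum_mul, Matrix.mul_sum, trace_sum]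
  refine Finset.sum_congr rfl fun i _ => ?_
  rw [Matrix.mul_assoc, Matrix.mul_assoc (K i), trace_mul_comm]
  simp only [Matrix.mul_assoc]

theorem trace_eq_of_forall_mul_eq_mul [CommSemiring R] [DecidableEq m] [DecidableEq n]
    {K : ι → Matrix m n R} {L : ι → Matrix n m R} {A : Matrix n n R} {B : Matrix m m R}
    (hKL : ∑ i, K i * L i = 1) (hLK : ∑ i, L i * K i = 1) (h : ∀ i, K i * A = B * K i) :
    A.trace = B.trace :=
  calc A.trace = (A * ∑ i, L i * (1 : Matrix m m R) * K i).trace := by simp [hLK]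
    _ = ((∑ i, K i * A * L i) * (1 : Matrix m m R)).trace := (trace_sum_mul_mul_mul K L A 1).symm
    _ = (B * ∑ i, K i * L i).trace := by simp only [h, Matrix.mul_assoc, Matrix.mul_sum, mul_one]
    _ = B.trace := by rw [hKL, Matrix.mul_one]

theorem mul_pow_eq_pow_mul_of_mul_eq_mul [Semiring R] [DecidableEq m] [DecidableEq n]
    {K : Matrix m n R} {A : Matrix n n R} {B : Matrix m m R} (h : K * A = B * K) (k : ℕ) :
    K * A ^ k = B ^ k * K := by
  induction k with
  | zero => simp
  | succ k ih => rw [pow_succ, pow_succ, ← Matrix.mul_assoc, ih, Matrix.mul_assoc, h,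
      Matrix.mul_assoc]

theorem sum_mul_sub_mul_mul_conjTranspose_self [Ring R] [StarRing R] [DecidableEq m]
    {K : ι → Matrix m n R} {X : Matrix n n R} {Y : Matrix m m R}
    (hK : ∑ i, K i * (K i)ᴴ = 1) (hXY : ∑ i, K i * X * (K i)ᴴ = Y) :
    ∑ i, (K i * X - Y * K i) * (K i * X - Y * K i)ᴴ =
      ∑ i, K i * (X * Xᴴ) * (K i)ᴴ - Y * Yᴴ := by
  have hXY' : ∑ i, K i * Xᴴ * (K i)ᴴ = Yᴴ := by
    simp [← hXY, conjTranspose_sum, Matrix.mul_assoc]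
  calc ∑ i, (K i * X - Y * K i) * (K i * X - Y * K i)ᴴ
    _ = ∑ i, (K i * (X * Xᴴ) * (K i)ᴴ - K i * X * (K i)ᴴ * Yᴴ
          - Y * (K i * Xᴴ * (K i)ᴴ) + Y * (K i * (K i)ᴴ) * Yᴴ) := by
      refine Finset.sum_congr rfl fun i _ => ?_
      simp only [conjTranspose_sub, conjTranspose_mul, Matrix.sub_mul, Matrix.mul_sub,
        Matrix.mul_assoc]
      abel
    _ = ∑ i, K i * (X * Xᴴ) * (K i)ᴴ - Y * Yᴴ - Y * Yᴴ + Y * 1 * Yᴴ := by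
      simp only [Finset.sum_add_distrib, Finset.sum_sub_distrib, ← Matrix.sum_mul,
        ← Matrix.mul_sum, hXY, hXY', hK]
    _ = ∑ i, K i * (X * Xᴴ) * (K i)ᴴ - Y * Yᴴ := by
      rw [Matrix.mul_one, sub_add_cancel]

theorem mul_eq_mul_of_sum_mul_mul_conjTranspose_eq [CommRing R] [NoZeroDivisors R]
    [PartialOrder R] [StarRing R] [StarOrderedRing R] [DecidableEq m] [DecidableEq n]
    {K : ι → Matrix m n R} {X : Matrix n n R} {Y : Matrix m m R}
    (hunital : ∑ i, K i * (K i)ᴴ = 1) (htp : ∑ i, (K i)ᴴ * K i = 1)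
    (hXY : ∑ i, K i * X * (K i)ᴴ = Y) (hYX : ∑ i, (K i)ᴴ * Y * K i = X) (i : ι) :
    K i * X = Y * K i := by
  have hYX' : ∑ i, (K i)ᴴ * Yᴴ * K i = Xᴴ := by
    simp [← hYX, conjTranspose_sum, Matrix.mul_assoc]
  have trace_map : (∑ i, K i * (X * Xᴴ) * (K i)ᴴ).trace = (X * Xᴴ).trace := by
    simpa [htp] using trace_sum_mul_mul_mul K (fun i => (K i)ᴴ) (X * Xᴴ) 1
  have trace_norm : (Y * Yᴴ).trace = (X * Xᴴ).trace := by
    simpa only [hXY, hYX'] using trace_sum_mul_mul_mul K (fun i => (K i)ᴴ) X Yᴴ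
  have sum_zero : ∑ i, ((K i * X - Y * K i) * (K i * X - Y * K i)ᴴ).trace = 0 := by
    rw [← trace_sum, sum_mul_sub_mul_mul_conjTranspose_self hunital hXY, trace_sub, trace_map,
      trace_norm, sub_self]
  have term_zero := (Finset.sum_eq_zero_iff_of_nonneg fun j _ =>
    (posSemidef_self_mul_conjTranspose (K j * X - Y * K j)).trace_nonneg).1 sum_zero i
      (Finset.mem_univ i)
  exact sub_eq_zero.1 (trace_mul_conjTranspose_self_eq_zero_iff.1 term_zero)

end KrausSums

section TracesOfPowers

open Polynomial

variable {F : Type*} [Field F]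

theorem isProj_maxGenEigenspace_aeval {V : Type*} [AddCommGroup V] [Module F V]
    {f : Module.End F V} {μ : F} {a b q : F[X]} {k : ℕ}
    (hcop : IsCoprime (X - C μ) q) (hab : a * (X - C μ) ^ k + b * q = 1)
    (hf : aeval f ((X - C μ) ^ k * q) = 0) :
    LinearMap.IsProj (f.maxGenEigenspace μ) (aeval f (b * q)) := by
  have aeval_sub_pow (l : ℕ) : aeval f ((X - C μ) ^ l) = (f - μ • 1) ^ l := by
    simp [Algebra.algebraMap_eq_smul_one]
  constructor
  · intro v
    refine (f.mem_maxGenEigenspace μ _).2 ⟨k, ?_⟩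
    rw [← aeval_sub_pow, ← Module.End.mul_apply, ← map_mul, mul_left_comm, map_mul, hf, mul_zero,
      LinearMap.zero_apply]
  · intro v hv
    obtain ⟨l, hl⟩ := (f.mem_maxGenEigenspace μ v).1 hv
    rw [← aeval_sub_pow] at hl
    have sub_pow_eq_zero : aeval f ((X - C μ) ^ k) v = 0 := by
      refine (Submodule.disjoint_def.1
        (disjoint_ker_aeval_of_isCoprime f (hcop.pow_left (m := l)))) _ ?_ ?_ <;>
        rw [LinearMap.mem_ker, ← Module.End.mul_apply, ← map_mul]
      · rw [mul_comm, map_mul, Module.End.mul_apply, hl, map_zero]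
      · rw [mul_comm, hf, LinearMap.zero_apply]
    calc aeval f (b * q) v = aeval f (a * (X - C μ) ^ k + b * q) v := by
          rw [map_add, map_mul _ a, LinearMap.add_apply, Module.End.mul_apply, sub_pow_eq_zero,
            map_zero, zero_add]
      _ = v := by rw [hab, map_one, Module.End.one_apply]

variable {m n : Type*} [Fintype m] [DecidableEq m] [Fintype n] [DecidableEq n]

theorem trace_aeval_eq_rootMultiplicity_charpoly {A : Matrix n n F} {μ : F} {a b q : F[X]} {k : ℕ}
    (hcop : IsCoprime (X - C μ) q) (hab : a * (X - C μ) ^ k + b * q = 1)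
    (hA : A.charpoly ∣ (X - C μ) ^ k * q) :
    (aeval A (b * q)).trace = A.charpoly.rootMultiplicity μ := by
  let f : Module.End F (n → F) := toLin' A
  have charpoly_f : f.charpoly = A.charpoly := charpoly_toLin' A
  have aeval_zero : aeval f ((X - C μ) ^ k * q) = 0 :=
    aeval_eq_zero_of_dvd_aeval_eq_zero (charpoly_f ▸ hA) f.aeval_self_charpoly
  calc (aeval A (b * q)).trace = LinearMap.trace F _ (aeval f (b * q)) := by
        rw [← trace_toLin'_eq]
        exact congrArg _ (aeval_algHom_apply (toLinAlgEquiv' (R := F) (n := n)) A (b * q)).symm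
    _ = Module.finrank F (f.maxGenEigenspace μ) :=
        (isProj_maxGenEigenspace_aeval hcop hab aeval_zero).trace
    _ = A.charpoly.rootMultiplicity μ := by
        rw [LinearMap.finrank_maxGenEigenspace_eq, charpoly_f]

theorem roots_charpoly_eq_of_trace_pow_eq [CharZero F] {A : Matrix n n F} {B : Matrix m m F}
    (h : ∀ k : ℕ, (A ^ k).trace = (B ^ k).trace) : A.charpoly.roots = B.charpoly.roots := by
  classical
  have trace_aeval (p : F[X]) : (aeval A p).trace = (aeval B p).trace := by
    simp only [aeval_eq_sum_range, trace_sum, trace_smul, h]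
  ext μ
  obtain ⟨q, hq, hndvd⟩ := exists_eq_pow_rootMultiplicity_mul_and_not_dvd
    (A.charpoly * B.charpoly) (A.charpoly_monic.mul B.charpoly_monic).ne_zero μ
  have hcop : IsCoprime (X - C μ) q := (irreducible_X_sub_C μ).coprime_iff_not_dvd.2 hndvd
  obtain ⟨a, b, hab⟩ := hcop.pow_left (m := (A.charpoly * B.charpoly).rootMultiplicity μ)
  rw [count_roots, count_roots, ← Nat.cast_inj (R := F),
    ← trace_aeval_eq_rootMultiplicity_charpoly hcop hab (hq ▸ dvd_mul_right _ _),
    ← trace_aeval_eq_rootMultiplicity_charpoly hcop hab (hq ▸ dvd_mul_left _ _), trace_aeval]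

theorem charpoly_eq_of_trace_pow_eq [CharZero F] {A : Matrix n n F} {B : Matrix m m F}
    (h : ∀ k : ℕ, (A ^ k).trace = (B ^ k).trace) : A.charpoly = B.charpoly := by
  let φ := algebraMap F (AlgebraicClosure F)
  have roots_eq : (A.map φ).charpoly.roots = (B.map φ).charpoly.roots := by
    refine roots_charpoly_eq_of_trace_pow_eq fun k => ?_
    rw [← Matrix.map_pow, ← Matrix.map_pow, ← AddMonoidHom.map_trace, h, AddMonoidHom.map_trace]
  refine Polynomial.map_injective φ φ.injective ?_
  rw [← charpoly_map, ← charpoly_map,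
    (IsAlgClosed.splits (A.map φ).charpoly).eq_prod_roots_of_monic (charpoly_monic _),
    (IsAlgClosed.splits (B.map φ).charpoly).eq_prod_roots_of_monic (charpoly_monic _), roots_eq]

end TracesOfPowers

theorem cospectral_of_krausMap_fixed_general {ι m n F : Type*} [Fintype ι] [Fintype m]
    [DecidableEq m] [Fintype n] [DecidableEq n] [Field F] [PartialOrder F] [StarRing F]
    [StarOrderedRing F] {K : ι → Matrix m n F} {X : Matrix n n F} {Y : Matrix m m F}
    (hunital : ∑ i, K i * (K i)ᴴ = 1) (htp : ∑ i, (K i)ᴴ * K i = 1)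
    (hXY : ∑ i, K i * X * (K i)ᴴ = Y) (hYX : ∑ i, (K i)ᴴ * Y * K i = X) :
    X.charpoly = Y.charpoly := by
  have hK := mul_eq_mul_of_sum_mul_mul_conjTranspose_eq hunital htp hXY hYX
  exact charpoly_eq_of_trace_pow_eq fun k => trace_eq_of_forall_mul_eq_mul hunital htp
    fun i => mul_pow_eq_pow_mul_of_mul_eq_mul (hK i) k

/-- For a unital trace-preserving completely positive map `Φ` with `Φ(X) = Y` and
`Φ†(Y) = X` for Hermitian `X`, `Y`, the matrices `X` and `Y` are cospectral. -/
theorem cospectral_of_krausMap_fixed {n : Type*} [Fintype n] [DecidableEq n] {m : ℕ}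
    (K : Fin m → Matrix n n ℂ)
    (hunital : ∑ i, K i * (K i)ᴴ = 1)
    (htp : ∑ i, (K i)ᴴ * K i = 1)
    (X Y : Matrix n n ℂ) (hX : X.IsHermitian) (hY : Y.IsHermitian)
    (hXY : krausMap K X = Y) (hYX : krausMapAdj K Y = X) :
    X.charpoly = Y.charpoly := by
  open scoped ComplexOrder in
  exact cospectral_of_krausMap_fixed_general hunital htp hXY hYX
end

section
/- Let D ∈ ℝ^{d×d} be a doubly stochastic matrix (all entries nonnegative, all row sums and all column sums equal to 1), and let u, v ∈ ℝ^d be vectors with the same multiset of entries (there is a permutation σ of {1,…,d} with v_i = u_{σ(i)} for all i). Then the following are equivalent: (1) Du = v; (2) D_{ij} = 0 whenever v_i ≠ u_j; (3) D(u ∘ w) = v ∘ (Dw) for all w ∈ ℝ^d; (4) Dᵀ(v ∘ w) = u ∘ (Dᵀw) for all w ∈ ℝ^d; (5) Dᵀv = u. -/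
open Matrix BigOperators

/-!
For doubly stochastic `D`, expanding the square gives
`∑ i, ∑ j, D i j * (v i - u j) ^ 2 = v ⬝ᵥ v - 2 * (v ⬝ᵥ D *ᵥ u) + u ⬝ᵥ u`.
If `v ⬝ᵥ v = u ⬝ᵥ u`, then each of `D *ᵥ u = v` and `Dᵀ *ᵥ v = u` makes the right-hand side zero,
so every term on the left vanishes: `D i j = 0` unless `v i = u j`. This vanishing is the entrywise
form of `D * diagonal u = diagonal v * D`; applying the latter, or its transpose, to the all-ones
vector gives back `D *ᵥ u = v`, or `Dᵀ *ᵥ v = u`.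
-/

section Intertwining

variable {m n R : Type*} [Fintype n]

theorem mul_diagonal_eq_diagonal_mul_iff [Fintype m] [DecidableEq m] [DecidableEq n]
    [CommSemiring R] [IsCancelMulZero R] {D : Matrix m n R} {u : n → R} {v : m → R} :
    D * diagonal u = diagonal v * D ↔ ∀ i j, v i ≠ u j → D i j = 0 := by
  simp only [← Matrix.ext_iff, mul_diagonal, diagonal_mul]
  refine forall₂_congr fun i j => ?_
  rw [mul_comm, eq_comm, mul_eq_mul_right_iff, or_iff_not_imp_left]

theorem diagonal_mulVec_eq_mul [DecidableEq n] [NonUnitalNonAssocSemiring R] (u w : n → R) :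
    diagonal u *ᵥ w = u * w :=
  funext (mulVec_diagonal u w)

theorem forall_mulVec_mul_eq_iff_mul_diagonal_eq [Fintype m] [DecidableEq m] [DecidableEq n]
    [Semiring R] {D : Matrix m n R} {u : n → R} {v : m → R} :
    (∀ w, D *ᵥ (u * w) = v * D *ᵥ w) ↔ D * diagonal u = diagonal v * D := by
  simp only [Matrix.ext_iff_mulVec, ← mulVec_mulVec, diagonal_mulVec_eq_mul]

theorem transpose_mul_diagonal_eq_diagonal_mul_iff [Fintype m] [DecidableEq m] [DecidableEq n]
    [CommSemiring R] {D : Matrix m n R} {u : n → R} {v : m → R} :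
    Dᵀ * diagonal v = diagonal u * Dᵀ ↔ D * diagonal u = diagonal v * D := by
  rw [← transpose_inj, eq_comm]
  simp only [transpose_mul, transpose_transpose, diagonal_transpose]

theorem mulVec_eq_of_forall_mulVec_mul_eq [NonAssocSemiring R] {D : Matrix m n R} {u : n → R}
    {v : m → R} (hrow : D *ᵥ 1 = 1) (h : ∀ w, D *ᵥ (u * w) = v * D *ᵥ w) : D *ᵥ u = v := by
  simpa only [hrow, mul_one] using h 1

end Intertwining

section WeightedSquares

variable {m n R : Type*} [Fintype m] [Fintype n] [CommRing R]

theorem sum_sum_mul_sub_sq (D : Matrix m n R) (u : n → R) (v : m → R) :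
    ∑ i, ∑ j, D i j * (v i - u j) ^ 2 =
      v ^ 2 ⬝ᵥ D *ᵥ 1 - 2 * (v ⬝ᵥ D *ᵥ u) + 1 ᵥ* D ⬝ᵥ u ^ 2 := by
  rw [← dotProduct_mulVec]
  simp only [dotProduct, mulVec, Pi.pow_apply, Pi.one_apply, Finset.mul_sum,
    ← Finset.sum_sub_distrib, ← Finset.sum_add_distrib]
  exact Finset.sum_congr rfl fun i _ => Finset.sum_congr rfl fun j _ => by ring

variable [LinearOrder R] [IsStrictOrderedRing R]

theorem sum_sum_mul_sub_sq_eq_zero_iff {D : Matrix m n R} (hD : ∀ i j, 0 ≤ D i j) {u : n → R}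
    {v : m → R} :
    ∑ i, ∑ j, D i j * (v i - u j) ^ 2 = 0 ↔ ∀ i j, v i ≠ u j → D i j = 0 := by
  have term_nonneg (i j) : 0 ≤ D i j * (v i - u j) ^ 2 := mul_nonneg (hD i j) (sq_nonneg _)
  have term_eq_zero (i j) : D i j * (v i - u j) ^ 2 = 0 ↔ (v i ≠ u j → D i j = 0) := by
    rw [mul_eq_zero, sq_eq_zero_iff, sub_eq_zero, or_comm, or_iff_not_imp_left]
  simp only [Fintype.sum_eq_zero_iff_of_nonneg, Finset.sum_nonneg, Pi.le_def, Pi.zero_apply,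
    funext_iff, term_nonneg, term_eq_zero, implies_true]

theorem dotProduct_mulVec_eq_dotProduct_self_iff [DecidableEq n] {D : Matrix n n R}
    (hD : D ∈ doublyStochastic R n) {u v : n → R} (huv : v ⬝ᵥ v = u ⬝ᵥ u) :
    v ⬝ᵥ D *ᵥ u = v ⬝ᵥ v ↔ ∀ i j, v i ≠ u j → D i j = 0 := by
  have sq_dotProduct_one (x : n → R) : x ^ 2 ⬝ᵥ 1 = x ⬝ᵥ x := by
    rw [dotProduct_one, sq]
    rfl
  have expansion : ∑ i, ∑ j, D i j * (v i - u j) ^ 2 = 2 * (v ⬝ᵥ v - v ⬝ᵥ D *ᵥ u) := by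
    rw [sum_sum_mul_sub_sq, mulVec_one_of_mem_doublyStochastic hD,
      one_vecMul_of_mem_doublyStochastic hD, dotProduct_comm 1, sq_dotProduct_one,
      sq_dotProduct_one, ← huv]
    ring
  rw [← sum_sum_mul_sub_sq_eq_zero_iff hD.1, expansion,
    mul_eq_zero_iff_left two_ne_zero, sub_eq_zero, eq_comm]

theorem doublyStochastic_mulVec_tfae_general [DecidableEq n] {D : Matrix n n R}
    (hD : D ∈ doublyStochastic R n) {u v : n → R} (huv : v ⬝ᵥ v = u ⬝ᵥ u) :
    [D *ᵥ u = v,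
      ∀ i j, v i ≠ u j → D i j = 0,
      ∀ w, D *ᵥ (u * w) = v * D *ᵥ w,
      ∀ w, Dᵀ *ᵥ (v * w) = u * Dᵀ *ᵥ w,
      Dᵀ *ᵥ v = u].TFAE := by
  have hDt : Dᵀ ∈ doublyStochastic R n := transpose_mem_doublyStochastic_iff.mpr hD
  have support_iff := dotProduct_mulVec_eq_dotProduct_self_iff hD huv
  tfae_have 1 → 2 := fun h => support_iff.mp (by rw [h])
  tfae_have 5 → 2 := fun h => support_iff.mp (by
    rw [dotProduct_mulVec, ← mulVec_transpose, h, huv])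
  tfae_have 2 ↔ 3 := by
    rw [forall_mulVec_mul_eq_iff_mul_diagonal_eq, mul_diagonal_eq_diagonal_mul_iff]
  tfae_have 3 ↔ 4 := by
    simp only [forall_mulVec_mul_eq_iff_mul_diagonal_eq, transpose_mul_diagonal_eq_diagonal_mul_iff]
  tfae_have 3 → 1 := mulVec_eq_of_forall_mulVec_mul_eq (mulVec_one_of_mem_doublyStochastic hD)
  tfae_have 4 → 5 := mulVec_eq_of_forall_mulVec_mul_eq (mulVec_one_of_mem_doublyStochastic hDt)
  tfae_finish

end WeightedSquares

/-- For a doubly stochastic matrix `D` and vectors `u`, `v` with the same multiset of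
entries, the following are equivalent: (1) `Du = v`; (2) `D_{ij} = 0` whenever
`v_i ≠ u_j`; (3) `D(u ∘ w) = v ∘ (Dw)` for all `w`; (4) `Dᵀ(v ∘ w) = u ∘ (Dᵀw)` for
all `w`; (5) `Dᵀv = u`.  Here `∘` is the entrywise product of vectors. -/
theorem doublyStochastic_mulVec_tfae {d : ℕ} (D : Matrix (Fin d) (Fin d) ℝ)
    (hnonneg : ∀ i j, 0 ≤ D i j)
    (hrow : ∀ i, ∑ j, D i j = 1)
    (hcol : ∀ j, ∑ i, D i j = 1)
    (u v : Fin d → ℝ)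
    (hperm : ∃ σ : Equiv.Perm (Fin d), ∀ i, v i = u (σ i)) :
    (D.mulVec u = v ↔ (∀ i j, v i ≠ u j → D i j = 0)) ∧
    ((∀ i j, v i ≠ u j → D i j = 0) ↔
      (∀ w : Fin d → ℝ, D.mulVec (u * w) = v * D.mulVec w)) ∧
    ((∀ w : Fin d → ℝ, D.mulVec (u * w) = v * D.mulVec w) ↔
      (∀ w : Fin d → ℝ, Dᵀ.mulVec (v * w) = u * Dᵀ.mulVec w)) ∧
    ((∀ w : Fin d → ℝ, Dᵀ.mulVec (v * w) = u * Dᵀ.mulVec w) ↔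
      Dᵀ.mulVec v = u) := by
  obtain ⟨σ, hσ⟩ := hperm
  have huv : v ⬝ᵥ v = u ⬝ᵥ u := by
    rw [show v = u ∘ σ from funext hσ, comp_equiv_dotProduct_comp_equiv]
  have tfae := doublyStochastic_mulVec_tfae_general
    (mem_doublyStochastic_iff_sum.mpr ⟨hnonneg, hrow, hcol⟩) huv
  exact ⟨tfae.out 0 1, tfae.out 1 2, tfae.out 2 3, tfae.out 3 4⟩
end
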